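/- arXiv:2602.16146 — 2 statements merged into one kernel-verified Lean document; each statement's English description precedes it below -/
import Mathlib

section
/- Fix p ∈ (0,1) and μ ∈ ℝ with μ ≠ 0. For δ > 0 let q_δ = p·N(μ,δ²) + (1−p)·N(0,δ²) be the two-component Gaussian mixture measure on ℝ and let ν = N(0,1) be the standard Gaussian measure. Then lim_{δ→0⁺} [ KL(q_δ ‖ ν) + log δ ] = p·μ²/2 + p·log p + (1−p)·log(1−p) − 1/2. In particular, up to terms not depending on μ, the KL divergence of the dropout variational distribution from the standard normal prior behaves as (p/2)μ² in the small-variance limit (Lemma 1, single-coordinate case). -/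
open MeasureTheory ProbabilityTheory Real Filter Topology

/-- Kullback–Leibler divergence `KL(μ‖ν) = ∫ log (dμ/dν) dμ`. -/
noncomputable def klDiv {α : Type*} [MeasurableSpace α] (μ ν : Measure α) : ℝ :=
  ∫ x, llr μ ν x ∂μ

/-- The two-component Gaussian mixture `p·N(m, δ²) + (1−p)·N(0, δ²)` on `ℝ`. -/
noncomputable def gaussianMixture (p m δ : ℝ) : Measure ℝ :=
  ENNReal.ofReal p • gaussianReal m (Real.toNNReal (δ ^ 2))
    + ENNReal.ofReal (1 - p) • gaussianReal 0 (Real.toNNReal (δ ^ 2))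

/-!
For finite measures `μ`, `ν`, the chain rule for densities gives
`KL(μ + ν ‖ κ) = (KL(μ ‖ κ) - KL(μ ‖ μ + ν)) + (KL(ν ‖ κ) - KL(ν ‖ μ + ν))`. Here
`d(μ + ν)/dμ = 1 + dν/dμ`, so `0 ≤ log (1 + t) ≤ √t` bounds `-KL(μ ‖ μ + ν)` between `0` and the
Hellinger affinity `∫ √(dμ dν)`: the divergence is additive up to the overlap of the two measures.
The weights of a mixture contribute `p log p + (1 - p) log (1 - p)`, the Gaussian components have
explicit divergences, and the affinity of `N(m, δ²)` and `N(0, δ²)` is `exp (-m² / (8 δ²))`, which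
tends to `0` with `δ`.
-/

lemma log_one_add_le_sqrt {t : ℝ} (ht : 0 ≤ t) : log (1 + t) ≤ √t := by
  have hcubic : 1 + √t + √t ^ 2 / 2 + √t ^ 3 / 6 ≤ rexp (√t) := by
    simpa [Finset.sum_range_succ, Nat.factorial] using Real.sum_le_exp_of_nonneg (sqrt_nonneg t) 4
  have hgap : 0 ≤ √t * ((√t - 3 / 2) ^ 2 + 15 / 4) / 6 := by positivity
  rw [log_le_iff_le_exp (by positivity)]
  linarith [sq_sqrt ht]

section LogLikelihoodRatio

variable {α : Type*} [MeasurableSpace α] {μ ν κ : Measure α}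

lemma ae_toReal_rnDeriv_pos [SigmaFinite μ] [SigmaFinite ν] (hμν : μ ≪ ν) :
    ∀ᵐ x ∂μ, 0 < (μ.rnDeriv ν x).toReal := by
  filter_upwards [Measure.rnDeriv_pos hμν, hμν.ae_le (Measure.rnDeriv_ne_top μ ν)] with x hpos hfin
  exact ENNReal.toReal_pos hpos.ne' hfin

lemma llr_add_llr [SigmaFinite μ] [SigmaFinite ν] [SigmaFinite κ] (hμν : μ ≪ ν) (hνκ : ν ≪ κ) :
    llr μ ν + llr ν κ =ᵐ[μ] llr μ κ := by
  filter_upwards [(hμν.trans hνκ).ae_le (Measure.rnDeriv_mul_rnDeriv (κ := κ) hμν),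
    ae_toReal_rnDeriv_pos hμν, hμν.ae_le (ae_toReal_rnDeriv_pos hνκ)] with x hmul hμpos hνpos
  rw [Pi.add_apply, llr, llr, ← log_mul hμpos.ne' hνpos.ne', ← ENNReal.toReal_mul,
    ← Pi.mul_apply, hmul, llr]

lemma llr_self_add [IsFiniteMeasure μ] [IsFiniteMeasure ν] :
    llr μ (μ + ν) =ᵐ[μ] fun x ↦ -log (1 + (ν.rnDeriv μ x).toReal) := by
  filter_upwards [neg_llr (Measure.AbsolutelyContinuous.rfl.add_right ν),
    Measure.rnDeriv_add μ ν μ, Measure.rnDeriv_self μ, Measure.rnDeriv_ne_top ν μ]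
    with x hneg hadd hself hfin
  rw [Pi.neg_apply, neg_eq_iff_eq_neg] at hneg
  rw [hneg, llr, hadd, Pi.add_apply, hself,
    ENNReal.toReal_add ENNReal.one_ne_top hfin, ENNReal.toReal_one]

lemma integrable_llr_smul_left [IsFiniteMeasure μ] [SigmaFinite ν] {a : ENNReal} (ha : a ≠ ⊤)
    (hμν : μ ≪ ν) (hint : Integrable (llr μ ν) μ) : Integrable (llr (a • μ) ν) (a • μ) := by
  obtain rfl | ha0 := eq_or_ne a 0
  · simp
  exact ((hint.add (integrable_const (log a.toReal))).congr
    (llr_smul_left hμν a ha0 ha).symm).smul_measure ha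

lemma klDiv_smul_left [IsFiniteMeasure μ] [SigmaFinite ν] {a : ENNReal} (ha : a ≠ ⊤)
    (hμν : μ ≪ ν) (hint : Integrable (llr μ ν) μ) :
    klDiv (a • μ) ν = a.toReal * (klDiv μ ν + μ.real Set.univ * log a.toReal) := by
  obtain rfl | ha0 := eq_or_ne a 0
  · simp [klDiv]
  rw [klDiv, integral_smul_measure, integral_congr_ae (llr_smul_left hμν a ha0 ha),
    integral_add hint (integrable_const _), integral_const, smul_eq_mul, smul_eq_mul, klDiv]

end LogLikelihoodRatio

section HellingerAffinity

variable {α : Type*} [MeasurableSpace α] {μ ν κ : Measure α}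

/-- The Hellinger affinity (Bhattacharyya coefficient) `∫ √(dμ dν)`, which measures the overlap of
`μ` and `ν`. It is encoded as `∫ √(dν/dμ) dμ`, so that no common dominating measure has to be
chosen. -/
noncomputable def hellingerAffinity (μ ν : Measure α) : ℝ :=
  ∫ x, √(ν.rnDeriv μ x).toReal ∂μ

variable [IsFiniteMeasure μ] [IsFiniteMeasure ν]

lemma integrable_sqrt_toReal_rnDeriv : Integrable (fun x ↦ √(ν.rnDeriv μ x).toReal) μ := by
  refine ((integrable_const (1 : ℝ)).add
    (Measure.integrable_toReal_rnDeriv (μ := ν) (ν := μ))).mono'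
    (Measure.measurable_rnDeriv ν μ).ennreal_toReal.sqrt.aestronglyMeasurable
    (Eventually.of_forall fun x ↦ ?_)
  have hr : 0 ≤ (ν.rnDeriv μ x).toReal := ENNReal.toReal_nonneg
  rw [norm_of_nonneg (sqrt_nonneg _), Pi.add_apply, sqrt_le_iff]
  constructor <;> nlinarith

lemma hellingerAffinity_smul_smul {a b : ENNReal} (ha : a ≠ ⊤) (hb : b ≠ ⊤) :
    hellingerAffinity (a • μ) (b • ν) = √(a.toReal * b.toReal) * hellingerAffinity μ ν := by
  obtain rfl | ha0 := eq_or_ne a 0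
  · simp [hellingerAffinity]
  have ha_pos : 0 < a.toReal := ENNReal.toReal_pos ha0 ha
  have := Measure.smul_finite ν hb
  have hderiv : (b • ν).rnDeriv (a • μ) =ᵐ[μ] a⁻¹ • b • ν.rnDeriv μ := by
    filter_upwards [Measure.rnDeriv_smul_right_of_ne_top (b • ν) μ ha0 ha,
      Measure.rnDeriv_smul_left_of_ne_top ν μ hb] with x hright hleft
    simp only [hright, hleft, Pi.smul_apply]
  have hscale (r : ℝ) :
      a.toReal * √(a.toReal⁻¹ * (b.toReal * r)) = √(a.toReal * b.toReal) * √r := by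
    rw [← sqrt_mul (by positivity)]
    calc a.toReal * √(a.toReal⁻¹ * (b.toReal * r))
        = √(a.toReal ^ 2 * (a.toReal⁻¹ * (b.toReal * r))) := by
          rw [sqrt_mul (sq_nonneg _), sqrt_sq ha_pos.le]
      _ = √(a.toReal * b.toReal * r) := by field_simp
  rw [hellingerAffinity, integral_smul_measure, hellingerAffinity, ← integral_const_mul,
    smul_eq_mul, ← integral_const_mul]
  refine integral_congr_ae ?_
  filter_upwards [hderiv] with x hx
  simp only [hx, Pi.smul_apply, smul_eq_mul, ENNReal.toReal_mul, ENNReal.toReal_inv, hscale]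

lemma integrable_llr_self_add : Integrable (llr μ (μ + ν)) μ := by
  refine (integrable_sqrt_toReal_rnDeriv (ν := ν)).mono'
    (measurable_llr _ _).aestronglyMeasurable ?_
  filter_upwards [llr_self_add (ν := ν)] with x hx
  have hr : 0 ≤ (ν.rnDeriv μ x).toReal := ENNReal.toReal_nonneg
  rw [hx, norm_neg, norm_of_nonneg (log_nonneg (by linarith))]
  exact log_one_add_le_sqrt hr

lemma klDiv_self_add_nonpos : klDiv μ (μ + ν) ≤ 0 := by
  refine integral_nonpos_of_ae ?_
  filter_upwards [llr_self_add (ν := ν)] with x hx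
  rw [hx]
  exact neg_nonpos.2 (log_nonneg (le_add_of_nonneg_right ENNReal.toReal_nonneg))

lemma neg_hellingerAffinity_le_klDiv_self_add : -hellingerAffinity μ ν ≤ klDiv μ (μ + ν) := by
  rw [hellingerAffinity, ← integral_neg]
  refine integral_mono_ae integrable_sqrt_toReal_rnDeriv.neg integrable_llr_self_add ?_
  filter_upwards [llr_self_add (ν := ν)] with x hx
  rw [hx]
  exact neg_le_neg (log_one_add_le_sqrt ENNReal.toReal_nonneg)

variable [SigmaFinite κ]

lemma klDiv_add (hμκ : μ ≪ κ) (hνκ : ν ≪ κ) (hμ : Integrable (llr μ κ) μ)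
    (hν : Integrable (llr ν κ) ν) :
    klDiv (μ + ν) κ = (klDiv μ κ - klDiv μ (μ + ν)) + (klDiv ν κ - klDiv ν (μ + ν)) := by
  have hllr {ρ : Measure α} [SigmaFinite ρ] (hρ : ρ ≪ μ + ν) :
      llr ρ κ - llr ρ (μ + ν) =ᵐ[ρ] llr (μ + ν) κ := by
    filter_upwards [llr_add_llr hρ (hμκ.add_left hνκ)] with x hx
    rw [Pi.sub_apply, ← hx, Pi.add_apply, add_sub_cancel_left]
  have hμ_llr := hllr (Measure.AbsolutelyContinuous.rfl.add_right ν)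
  have hν_llr := hllr (Measure.AbsolutelyContinuous.rfl.add_right' μ)
  have hμ' : Integrable (llr μ (μ + ν)) μ := integrable_llr_self_add
  have hν' : Integrable (llr ν (μ + ν)) ν := add_comm ν μ ▸ integrable_llr_self_add
  simp only [klDiv]
  rw [integral_add_measure ((hμ.sub hμ').congr hμ_llr) ((hν.sub hν').congr hν_llr),
    ← integral_congr_ae hμ_llr, ← integral_congr_ae hν_llr, integral_sub' hμ hμ',
    integral_sub' hν hν']

lemma klDiv_add_mem_Icc (hμκ : μ ≪ κ) (hνκ : ν ≪ κ) (hμ : Integrable (llr μ κ) μ)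
    (hν : Integrable (llr ν κ) ν) :
    klDiv (μ + ν) κ ∈ Set.Icc (klDiv μ κ + klDiv ν κ)
      (klDiv μ κ + klDiv ν κ + (hellingerAffinity μ ν + hellingerAffinity ν μ)) := by
  have hμ_upper := klDiv_self_add_nonpos (μ := μ) (ν := ν)
  have hμ_lower := neg_hellingerAffinity_le_klDiv_self_add (μ := μ) (ν := ν)
  have hν_upper := klDiv_self_add_nonpos (μ := ν) (ν := μ)
  have hν_lower := neg_hellingerAffinity_le_klDiv_self_add (μ := ν) (ν := μ)
  rw [add_comm ν μ] at hν_upper hν_lower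
  rw [klDiv_add hμκ hνκ hμ hν]
  constructor <;> linarith

lemma klDiv_smul_add_smul_mem_Icc {a b : ENNReal} (ha : a ≠ ⊤) (hb : b ≠ ⊤)
    (hμκ : μ ≪ κ) (hνκ : ν ≪ κ) (hμ : Integrable (llr μ κ) μ) (hν : Integrable (llr ν κ) ν) :
    klDiv (a • μ + b • ν) κ ∈ Set.Icc
      (a.toReal * (klDiv μ κ + μ.real Set.univ * log a.toReal)
        + b.toReal * (klDiv ν κ + ν.real Set.univ * log b.toReal))
      (a.toReal * (klDiv μ κ + μ.real Set.univ * log a.toReal)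
        + b.toReal * (klDiv ν κ + ν.real Set.univ * log b.toReal)
        + √(a.toReal * b.toReal) * (hellingerAffinity μ ν + hellingerAffinity ν μ)) := by
  have := Measure.smul_finite μ ha
  have := Measure.smul_finite ν hb
  have h := klDiv_add_mem_Icc (hμκ.smul_left a) (hνκ.smul_left b)
    (integrable_llr_smul_left ha hμκ hμ) (integrable_llr_smul_left hb hνκ hν)
  rwa [klDiv_smul_left ha hμκ hμ, klDiv_smul_left hb hνκ hν, hellingerAffinity_smul_smul ha hb,
    hellingerAffinity_smul_smul hb ha, mul_comm b.toReal a.toReal, ← mul_add] at h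

end HellingerAffinity

section Gaussian

variable {m₁ m₂ : ℝ} {v v₁ v₂ : NNReal}

lemma gaussianReal_absolutelyContinuous_gaussianReal (hv₁ : v₁ ≠ 0) (hv₂ : v₂ ≠ 0) :
    gaussianReal m₁ v₁ ≪ gaussianReal m₂ v₂ :=
  (gaussianReal_absolutelyContinuous m₁ hv₁).trans (gaussianReal_absolutelyContinuous' m₂ hv₂)

lemma log_gaussianPDFReal (m : ℝ) (hv : v ≠ 0) (x : ℝ) :
    log (gaussianPDFReal m v x) = -(log (2 * π) + log v + (x - m) ^ 2 / v) / 2 := by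
  have hv' : (0 : ℝ) < v := by positivity
  rw [gaussianPDFReal, log_mul (by positivity) (exp_ne_zero _), log_exp, log_inv,
    log_sqrt (by positivity), log_mul (by positivity) hv'.ne']
  field_simp
  ring

lemma llr_gaussianReal (hv₁ : v₁ ≠ 0) (hv₂ : v₂ ≠ 0) :
    llr (gaussianReal m₁ v₁) (gaussianReal m₂ v₂) =ᵐ[gaussianReal m₁ v₁]
      fun x ↦ (log (v₂ / v₁) + (x - m₂) ^ 2 / v₂ - (x - m₁) ^ 2 / v₁) / 2 := by
  have hac := gaussianReal_absolutelyContinuous m₁ hv₁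
  filter_upwards [llr_add_llr (gaussianReal_absolutelyContinuous_gaussianReal hv₁ hv₂)
    (gaussianReal_absolutelyContinuous m₂ hv₂), hac.ae_le (rnDeriv_gaussianReal m₁ v₁),
    hac.ae_le (rnDeriv_gaussianReal m₂ v₂)] with x hchain hpdf₁ hpdf₂
  rw [Pi.add_apply, ← eq_sub_iff_add_eq] at hchain
  rw [hchain, llr, llr, hpdf₁, hpdf₂, toReal_gaussianPDF, toReal_gaussianPDF,
    log_gaussianPDFReal m₁ hv₁, log_gaussianPDFReal m₂ hv₂, log_div (by simpa) (by simpa)]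
  ring

lemma integrable_sub_sq_gaussianReal (m c : ℝ) (v : NNReal) :
    Integrable (fun x ↦ (x - c) ^ 2) (gaussianReal m v) :=
  ((memLp_id_gaussianReal 2).sub (memLp_const c)).integrable_sq

lemma integral_sub_sq_gaussianReal (m c : ℝ) (v : NNReal) :
    ∫ x, (x - c) ^ 2 ∂gaussianReal m v = v + (m - c) ^ 2 := by
  have hid : Integrable (fun x ↦ x) (gaussianReal m v) :=
    (memLp_id_gaussianReal 1).integrable le_rfl
  have hmean : ∫ x, (x - c) ∂gaussianReal m v = m - c := by
    rw [integral_sub hid (integrable_const c), integral_id_gaussianReal, integral_const,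
      probReal_univ, one_smul]
  have hvar : Var[fun x ↦ x - c; gaussianReal m v] = v := by
    rw [variance_sub_const (by fun_prop), variance_fun_id_gaussianReal]
  have hmemLp : MemLp (fun x ↦ x - c) 2 (gaussianReal m v) :=
    (memLp_id_gaussianReal 2).sub (memLp_const c)
  rw [variance_eq_sub hmemLp, hmean, sub_eq_iff_eq_add] at hvar
  exact hvar

lemma integrable_llr_gaussianReal (hv₁ : v₁ ≠ 0) (hv₂ : v₂ ≠ 0) :
    Integrable (llr (gaussianReal m₁ v₁) (gaussianReal m₂ v₂)) (gaussianReal m₁ v₁) :=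
  ((((integrable_const _).add ((integrable_sub_sq_gaussianReal m₁ m₂ v₁).div_const _)).sub
    ((integrable_sub_sq_gaussianReal m₁ m₁ v₁).div_const _)).div_const 2).congr
    (llr_gaussianReal hv₁ hv₂).symm

lemma klDiv_gaussianReal (hv₁ : v₁ ≠ 0) (hv₂ : v₂ ≠ 0) :
    klDiv (gaussianReal m₁ v₁) (gaussianReal m₂ v₂)
      = (log (v₂ / v₁) + (v₁ + (m₁ - m₂) ^ 2) / v₂ - 1) / 2 := by
  have hsq (c w : ℝ) : Integrable (fun x ↦ (x - c) ^ 2 / w) (gaussianReal m₁ v₁) :=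
    (integrable_sub_sq_gaussianReal m₁ c v₁).div_const w
  have hlin : Integrable (fun x ↦ log (v₂ / v₁) + (x - m₂) ^ 2 / v₂) (gaussianReal m₁ v₁) :=
    (integrable_const _).add (hsq _ _)
  rw [klDiv, integral_congr_ae (llr_gaussianReal hv₁ hv₂), integral_div,
    integral_sub hlin (hsq _ _), integral_add (integrable_const _) (hsq _ _), integral_div,
    integral_div, integral_sub_sq_gaussianReal, integral_sub_sq_gaussianReal, integral_const]
  simp [hv₁]

lemma hellingerAffinity_gaussianReal (m₁ m₂ : ℝ) (hv : v ≠ 0) :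
    hellingerAffinity (gaussianReal m₁ v) (gaussianReal m₂ v)
      = rexp (-(m₁ - m₂) ^ 2 / (8 * v)) := by
  have hv' : (v : ℝ) ≠ 0 := by simpa
  have hac := gaussianReal_absolutelyContinuous_gaussianReal (m₁ := m₁) (m₂ := m₂) hv hv
  have hsqrt : (fun x ↦ √((gaussianReal m₂ v).rnDeriv (gaussianReal m₁ v) x).toReal)
      =ᵐ[gaussianReal m₁ v]
        fun x ↦ rexp ((m₁ ^ 2 - m₂ ^ 2) / (4 * v)) * rexp ((m₂ - m₁) / (2 * v) * x) := by
    filter_upwards [exp_llr_of_ac' (gaussianReal m₂ v) (gaussianReal m₁ v) hac,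
      hac.ae_le (llr_gaussianReal (m₁ := m₂) (m₂ := m₁) hv hv)] with x hexp hllr
    rw [← hexp, hllr, ← exp_half, ← exp_add, div_self hv', log_one]
    congr 1
    field_simp
    ring
  have hmgf := congrFun (mgf_fun_id_gaussianReal (μ := m₁) (v := v)) ((m₂ - m₁) / (2 * v))
  rw [mgf] at hmgf
  rw [hellingerAffinity, integral_congr_ae hsqrt, integral_const_mul, hmgf, ← exp_add]
  congr 1
  field_simp
  ring

end Gaussian

lemma klDiv_gaussianReal_standard {δ : ℝ} (hδ : δ ≠ 0) (m : ℝ) :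
    klDiv (gaussianReal m (δ ^ 2).toNNReal) (gaussianReal 0 1)
      = (δ ^ 2 + m ^ 2 - 1) / 2 - log δ := by
  rw [klDiv_gaussianReal (by simpa using hδ) one_ne_zero, coe_toNNReal _ (sq_nonneg δ),
    NNReal.coe_one, one_div, log_inv, log_pow]
  push_cast
  ring

lemma klDiv_gaussianMixture_add_log_mem_Icc {p δ : ℝ} (hp0 : 0 ≤ p) (hp1 : p ≤ 1) (hδ : δ ≠ 0)
    (m : ℝ) :
    klDiv (gaussianMixture p m δ) (gaussianReal 0 1) + log δ ∈ Set.Icc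
      (p * m ^ 2 / 2 + p * log p + (1 - p) * log (1 - p) - 1 / 2 + δ ^ 2 / 2)
      (p * m ^ 2 / 2 + p * log p + (1 - p) * log (1 - p) - 1 / 2 + δ ^ 2 / 2
        + 2 * √(p * (1 - p)) * rexp (-(m ^ 2 / 8) / δ ^ 2)) := by
  have hv : (δ ^ 2).toNNReal ≠ 0 := by simpa using hδ
  have h := klDiv_smul_add_smul_mem_Icc (a := ENNReal.ofReal p) (b := ENNReal.ofReal (1 - p))
    (κ := gaussianReal 0 1) ENNReal.ofReal_ne_top ENNReal.ofReal_ne_top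
    (gaussianReal_absolutelyContinuous_gaussianReal (m₁ := m) hv one_ne_zero)
    (gaussianReal_absolutelyContinuous_gaussianReal (m₁ := 0) hv one_ne_zero)
    (integrable_llr_gaussianReal hv one_ne_zero) (integrable_llr_gaussianReal hv one_ne_zero)
  rw [← gaussianMixture, klDiv_gaussianReal_standard hδ, klDiv_gaussianReal_standard hδ,
    hellingerAffinity_gaussianReal m 0 hv, hellingerAffinity_gaussianReal 0 m hv,
    ENNReal.toReal_ofReal hp0, ENNReal.toReal_ofReal (sub_nonneg.2 hp1), probReal_univ,
    probReal_univ, coe_toNNReal _ (sq_nonneg δ), zero_sub, neg_sq, sub_zero,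
    ← div_div, neg_div] at h
  constructor <;> linarith [h.1, h.2]

lemma tendsto_exp_neg_div_sq_nhdsGT_zero {c : ℝ} (hc : 0 < c) :
    Tendsto (fun δ : ℝ ↦ rexp (-c / δ ^ 2)) (𝓝[>] 0) (𝓝 0) := by
  have hsq : Tendsto (fun δ : ℝ ↦ (δ ^ 2)⁻¹) (𝓝[>] 0) atTop := by
    simp only [← inv_pow]
    exact (tendsto_pow_atTop two_ne_zero).comp (tendsto_inv_nhdsGT_zero (𝕜 := ℝ))
  exact tendsto_exp_atBot.comp (hsq.const_mul_atTop_of_neg (neg_neg_of_pos hc))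

/-- For `p ∈ (0,1)` and `μ ≠ 0`,
`lim_{δ→0⁺} [ KL(p·N(μ,δ²) + (1−p)·N(0,δ²) ‖ N(0,1)) + log δ ]
  = p·μ²/2 + p·log p + (1−p)·log(1−p) − 1/2`. -/
theorem klDiv_gaussianMixture_small_variance_limit (p μ : ℝ)
    (hp0 : 0 < p) (hp1 : p < 1) (hμ : μ ≠ 0) :
    Tendsto
      (fun δ : ℝ => klDiv (gaussianMixture p μ δ) (gaussianReal 0 1) + Real.log δ)
      (𝓝[>] 0)
      (𝓝 (p * μ ^ 2 / 2 + p * Real.log p + (1 - p) * Real.log (1 - p) - 1 / 2)) := by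
  let L := p * μ ^ 2 / 2 + p * log p + (1 - p) * log (1 - p) - 1 / 2
  let overlap (δ : ℝ) := 2 * √(p * (1 - p)) * rexp (-(μ ^ 2 / 8) / δ ^ 2)
  have hlower : Tendsto (fun δ : ℝ ↦ L + δ ^ 2 / 2) (𝓝[>] 0) (𝓝 L) :=
    tendsto_nhdsWithin_of_tendsto_nhds (Continuous.tendsto' (by fun_prop) 0 L (by simp))
  have hoverlap : Tendsto overlap (𝓝[>] 0) (𝓝 0) := by
    have hμ8 : 0 < μ ^ 2 / 8 := by positivity
    simpa only [mul_zero] using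
      (tendsto_exp_neg_div_sq_nhdsGT_zero hμ8).const_mul (2 * √(p * (1 - p)))
  have hupper : Tendsto (fun δ : ℝ ↦ L + δ ^ 2 / 2 + overlap δ) (𝓝[>] 0) (𝓝 L) := by
    simpa only [add_zero] using hlower.add hoverlap
  have hmem : ∀ᶠ δ in 𝓝[>] (0 : ℝ),
      klDiv (gaussianMixture p μ δ) (gaussianReal 0 1) + log δ ∈
        Set.Icc (L + δ ^ 2 / 2) (L + δ ^ 2 / 2 + overlap δ) := by
    filter_upwards [self_mem_nhdsWithin] with δ hδ
    exact klDiv_gaussianMixture_add_log_mem_Icc hp0.le hp1.le (ne_of_gt hδ) μ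
  exact tendsto_of_tendsto_of_tendsto_of_le_of_le' hlower hupper
    (hmem.mono fun _ h ↦ h.1) (hmem.mono fun _ h ↦ h.2)
end

section
/- Fix p ∈ (0,1) and μ ∈ ℝ with μ ≠ 0. For δ > 0 let g_δ be the Lebesgue density of the Gaussian mixture q_δ = p·N(μ,δ²) + (1−p)·N(0,δ²) on ℝ, and let H(q_δ) = −∫ g_δ(x)·log g_δ(x) dx be its differential entropy. Then lim_{δ→0⁺} [ H(q_δ) − (1/2)·log(2πe·δ²) ] = −p·log p − (1−p)·log(1−p). That is, as the component variances shrink to zero with distinct means, the mixture entropy equals the common Gaussian component entropy plus the binary entropy of the mixing weight, which is the key entropy asymptotic in the proof of Lemma 1. -/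
/-!
Rescaling space by `δ⁻¹` adds `-log δ` to the entropy of a density on `ℝ` and turns `q_δ` into a
mixture of unit-variance Gaussians whose means move infinitely far apart as `δ → 0`. Centred at its
`i`-th component, such a mixture `g` tends pointwise to `w i * f`, `f` being the common shape of the
components, because the other components escape to infinity. As `w i * f ≤ g ≤ sup f` throughout,
dominated convergence applies to `f * log g`, and the entropy tends to
`∑ i, ∫ negMulLog (w i * f) = ∫ negMulLog f + ∑ i, negMulLog (w i)`.
-/

open MeasureTheory ProbabilityTheory Real Filter Topology

/-- Lebesgue density of the two-component Gaussian mixture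
`p·N(m, δ²) + (1−p)·N(0, δ²)` on `ℝ`. -/
noncomputable def mixturePDF (p m δ : ℝ) (x : ℝ) : ℝ :=
  p * gaussianPDFReal m (Real.toNNReal (δ ^ 2)) x
    + (1 - p) * gaussianPDFReal 0 (Real.toNNReal (δ ^ 2)) x

lemma abs_mul_log_le {a b c : ℝ} (ha : 0 ≤ a) (hab : a ≤ b) (hbc : b ≤ c) :
    |a * log b| ≤ |negMulLog a| + a * |log c| := by
  rcases ha.eq_or_lt with rfl | ha
  · simp
  have hlog : |log b| ≤ |log a| + |log c| :=
    (abs_le_max_abs_abs (log_le_log ha hab) (log_le_log (ha.trans_le hab) hbc)).trans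
      (max_le_add_of_nonneg (abs_nonneg _) (abs_nonneg _))
  calc |a * log b| = a * |log b| := by rw [abs_mul, abs_of_pos ha]
    _ ≤ a * (|log a| + |log c|) := by gcongr
    _ = |negMulLog a| + a * |log c| := by
      rw [negMulLog, neg_mul, abs_neg, abs_mul, abs_of_pos ha, mul_add]

lemma tendsto_mul_log {α : Type*} {l : Filter α} {b : α → ℝ} {a : ℝ} (hb : Tendsto b l (𝓝 a)) :
    Tendsto (fun t => a * log (b t)) l (𝓝 (a * log a)) := by
  rcases eq_or_ne a 0 with rfl | ha
  · simpa only [zero_mul] using tendsto_const_nhds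
  · exact (hb.log ha).const_mul a

lemma integrable_negMulLog_const_mul {E : Type*} [MeasurableSpace E] {μ : Measure E} {f : E → ℝ}
    (hf : Integrable f μ) (hent : Integrable (fun x => negMulLog (f x)) μ) (c : ℝ) :
    Integrable (fun x => negMulLog (c * f x)) μ := by
  simp only [negMulLog_mul]
  exact (hf.mul_const _).add (hent.const_mul c)

lemma integrable_abs_negMulLog_const_mul_add {E : Type*} [MeasurableSpace E] {μ : Measure E}
    {f : E → ℝ} (hf : Integrable f μ) (hent : Integrable (fun x => negMulLog (f x)) μ) (c C : ℝ) :
    Integrable (fun x => |negMulLog (c * f x)| + c * f x * C) μ :=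
  (integrable_negMulLog_const_mul hf hent c).abs.add ((hf.const_mul c).mul_const C)

/-- The differential entropy `-∫ g log g` of a density `g` with respect to the reference
measure `μ`. It takes the junk value `0` when `g log g` is not integrable. -/
noncomputable def differentialEntropy {E : Type*} [MeasurableSpace E] (μ : Measure E)
    (g : E → ℝ) : ℝ :=
  ∫ x, negMulLog (g x) ∂μ

lemma differentialEntropy_const_mul {E : Type*} [MeasurableSpace E] {μ : Measure E} {f : E → ℝ}
    (hf : Integrable f μ) (hent : Integrable (fun x => negMulLog (f x)) μ) (c : ℝ) :
    differentialEntropy μ (fun x => c * f x)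
      = negMulLog c * ∫ x, f x ∂μ + c * differentialEntropy μ f := by
  simp only [differentialEntropy, negMulLog_mul]
  rw [integral_add (hf.mul_const _) (hent.const_mul c), integral_mul_const, integral_const_mul,
    mul_comm]

/-- The mixture `∑ i, w i * f (x - s i)` of the translates by `s i` of a single density `f`,
with weights `w i`. -/
def translateMixture {ι E : Type*} [Fintype ι] [Sub E] (w : ι → ℝ) (s : ι → E) (f : E → ℝ)
    (x : E) : ℝ :=
  ∑ i, w i * f (x - s i)

section TranslateMixture

variable {ι E : Type*} [Fintype ι] [AddGroup E] {w : ι → ℝ} {f : E → ℝ} {C : ℝ}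

lemma translateMixture_le (hw : ∀ i, 0 ≤ w i) (hw1 : ∑ i, w i = 1) (hfC : ∀ x, f x ≤ C)
    (s : ι → E) (x : E) : translateMixture w s f x ≤ C :=
  calc translateMixture w s f x ≤ ∑ i, w i * C :=
        Finset.sum_le_sum fun i _ => mul_le_mul_of_nonneg_left (hfC _) (hw i)
    _ = C := by rw [← Finset.sum_mul, hw1, one_mul]

lemma mul_le_translateMixture_add (hw : ∀ i, 0 ≤ w i) (hf0 : ∀ x, 0 ≤ f x) (s : ι → E) (i : ι)
    (z : E) : w i * f z ≤ translateMixture w s f (z + s i) := by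
  simpa only [translateMixture, add_sub_cancel_right] using
    Finset.single_le_sum (fun j _ => mul_nonneg (hw j) (hf0 (z + s i - s j))) (Finset.mem_univ i)

lemma abs_mul_log_translateMixture_le (hw : ∀ i, 0 ≤ w i) (hw1 : ∑ i, w i = 1)
    (hf0 : ∀ x, 0 ≤ f x) (hfC : ∀ x, f x ≤ C) (s : ι → E) (i : ι) (z : E) :
    |w i * f z * log (translateMixture w s f (z + s i))|
      ≤ |negMulLog (w i * f z)| + w i * f z * |log C| :=
  abs_mul_log_le (mul_nonneg (hw i) (hf0 z)) (mul_le_translateMixture_add hw hf0 s i z)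
    (translateMixture_le hw hw1 hfC s _)

-- The argument of the logarithm is kept as `x - s i + s i` so that the `i`-th term is visibly a
-- translate by `s i`.
lemma negMulLog_translateMixture (s : ι → E) (x : E) :
    negMulLog (translateMixture w s f x)
      = -∑ i, w i * f (x - s i) * log (translateMixture w s f (x - s i + s i)) := by
  simp only [sub_add_cancel]
  rw [← Finset.sum_mul, negMulLog, neg_mul]
  rfl

lemma tendsto_translateMixture_add [TopologicalSpace E] [ContinuousAdd E]
    (hf : Tendsto f (cocompact E) (𝓝 0)) {α : Type*} {l : Filter α} {s : α → ι → E}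
    (hs : ∀ i j, i ≠ j → Tendsto (fun t => s t i - s t j) l (cocompact E)) (i : ι) (z : E) :
    Tendsto (fun t => translateMixture w (s t) f (z + s t i)) l (𝓝 (w i * f z)) := by
  classical
  have hterm (j : ι) : Tendsto (fun t => w j * f (z + s t i - s t j)) l
      (𝓝 (if j = i then w i * f z else 0)) := by
    split_ifs with hji
    · simpa only [hji, add_sub_cancel_right] using tendsto_const_nhds
    have hesc : Tendsto (fun t => z + (s t i - s t j)) l (cocompact E) :=
      (Homeomorph.addLeft z).isClosedEmbedding.tendsto_cocompact.comp (hs i j (Ne.symm hji))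
    simpa only [add_sub_assoc, mul_zero, Function.comp_def] using (hf.comp hesc).const_mul (w j)
  simpa only [translateMixture, Finset.sum_ite_eq', Finset.mem_univ, if_true] using
    tendsto_finsetSum Finset.univ fun j _ => hterm j

variable [MeasurableSpace E] [MeasurableAdd E] {μ : Measure E} [μ.IsAddRightInvariant]

lemma integrable_translateMixture (hf : Integrable f μ) (s : ι → E) :
    Integrable (translateMixture w s f) μ :=
  integrable_finsetSum _ fun i _ => (hf.comp_sub_right (s i)).const_mul (w i)

lemma integral_translateMixture (hf : Integrable f μ) (s : ι → E) :
    ∫ x, translateMixture w s f x ∂μ = (∑ i, w i) * ∫ x, f x ∂μ := by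
  simp only [translateMixture]
  rw [integral_finsetSum _ fun i _ => (hf.comp_sub_right (s i)).const_mul (w i), Finset.sum_mul]
  simp only [integral_const_mul, integral_sub_right_eq_self f]

lemma aestronglyMeasurable_mul_log_translateMixture (hf : Integrable f μ) (s : ι → E) (i : ι) :
    AEStronglyMeasurable (fun z => w i * f z * log (translateMixture w s f (z + s i))) μ :=
  (hf.const_mul (w i)).aestronglyMeasurable.mul
    ((integrable_translateMixture hf s).comp_add_right
      (s i)).aestronglyMeasurable.aemeasurable.log.aestronglyMeasurable

lemma integrable_mul_log_translateMixture (hw : ∀ i, 0 ≤ w i) (hw1 : ∑ i, w i = 1)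
    (hf0 : ∀ x, 0 ≤ f x) (hfC : ∀ x, f x ≤ C) (hf : Integrable f μ)
    (hent : Integrable (fun x => negMulLog (f x)) μ) (s : ι → E) (i : ι) :
    Integrable (fun z => w i * f z * log (translateMixture w s f (z + s i))) μ :=
  (integrable_abs_negMulLog_const_mul_add hf hent (w i) _).mono'
    (aestronglyMeasurable_mul_log_translateMixture hf s i)
    (ae_of_all _ fun z => abs_mul_log_translateMixture_le hw hw1 hf0 hfC s i z)

lemma integrable_negMulLog_translateMixture (hw : ∀ i, 0 ≤ w i) (hw1 : ∑ i, w i = 1)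
    (hf0 : ∀ x, 0 ≤ f x) (hfC : ∀ x, f x ≤ C) (hf : Integrable f μ)
    (hent : Integrable (fun x => negMulLog (f x)) μ) (s : ι → E) :
    Integrable (fun x => negMulLog (translateMixture w s f x)) μ := by
  simp only [negMulLog_translateMixture]
  exact (integrable_finsetSum _ fun i _ =>
    (integrable_mul_log_translateMixture hw hw1 hf0 hfC hf hent s i).comp_sub_right (s i)).neg

lemma differentialEntropy_translateMixture (hw : ∀ i, 0 ≤ w i) (hw1 : ∑ i, w i = 1)
    (hf0 : ∀ x, 0 ≤ f x) (hfC : ∀ x, f x ≤ C) (hf : Integrable f μ)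
    (hent : Integrable (fun x => negMulLog (f x)) μ) (s : ι → E) :
    differentialEntropy μ (translateMixture w s f)
      = -∑ i, ∫ z, w i * f z * log (translateMixture w s f (z + s i)) ∂μ := by
  have hterm (i : ι) := integrable_mul_log_translateMixture hw hw1 hf0 hfC hf hent s i
  simp only [differentialEntropy, negMulLog_translateMixture]
  rw [integral_neg, integral_finsetSum _ fun i _ => (hterm i).comp_sub_right (s i)]
  congr! 2 with i
  exact integral_sub_right_eq_self
    (fun z => w i * f z * log (translateMixture w s f (z + s i))) (s i)

end TranslateMixture

theorem tendsto_differentialEntropy_translateMixture {ι E α : Type*} [Fintype ι] [AddGroup E]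
    [TopologicalSpace E] [ContinuousAdd E] [MeasurableSpace E] [MeasurableAdd E]
    {μ : Measure E} [μ.IsAddRightInvariant] {w : ι → ℝ} {f : E → ℝ} {C : ℝ} {l : Filter α}
    [l.IsCountablyGenerated] {s : α → ι → E} (hw : ∀ i, 0 ≤ w i) (hw1 : ∑ i, w i = 1)
    (hf0 : ∀ x, 0 ≤ f x) (hfC : ∀ x, f x ≤ C) (hf1 : ∫ x, f x ∂μ = 1)
    (hent : Integrable (fun x => negMulLog (f x)) μ) (hf : Tendsto f (cocompact E) (𝓝 0))
    (hs : ∀ i j, i ≠ j → Tendsto (fun t => s t i - s t j) l (cocompact E)) :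
    Tendsto (fun t => differentialEntropy μ (translateMixture w (s t) f)) l
      (𝓝 (differentialEntropy μ f + ∑ i, negMulLog (w i))) := by
  have hfint : Integrable f μ := .of_integral_ne_zero (by simp [hf1])
  have hcomponent (i : ι) :
      Tendsto (fun t => ∫ z, w i * f z * log (translateMixture w (s t) f (z + s t i)) ∂μ) l
        (𝓝 (∫ z, w i * f z * log (w i * f z) ∂μ)) :=
    tendsto_integral_filter_of_dominated_convergence _
      (.of_forall fun t => aestronglyMeasurable_mul_log_translateMixture hfint (s t) i)
      (.of_forall fun t => ae_of_all _ fun z =>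
        abs_mul_log_translateMixture_le hw hw1 hf0 hfC (s t) i z)
      (integrable_abs_negMulLog_const_mul_add hfint hent (w i) _)
      (ae_of_all _ fun z => tendsto_mul_log (tendsto_translateMixture_add hf hs i z))
  have hlimit : -∑ i, ∫ z, w i * f z * log (w i * f z) ∂μ
      = differentialEntropy μ f + ∑ i, negMulLog (w i) :=
    calc -∑ i, ∫ z, w i * f z * log (w i * f z) ∂μ
        = ∑ i, differentialEntropy μ (fun z => w i * f z) := by
          simp only [differentialEntropy, negMulLog, neg_mul, integral_neg, Finset.sum_neg_distrib]
      _ = differentialEntropy μ f + ∑ i, negMulLog (w i) := by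
          simp only [differentialEntropy_const_mul hfint hent, hf1, mul_one]
          rw [Finset.sum_add_distrib, ← Finset.sum_mul, hw1, one_mul, add_comm]
  simp only [differentialEntropy_translateMixture hw hw1 hf0 hfC hfint hent, ← hlimit]
  exact (tendsto_finsetSum _ fun i _ => hcomponent i).neg

section Dilation

variable {E : Type*} [NormedAddCommGroup E] [NormedSpace ℝ E]

/-- The density of `δ • X` for a random vector `X` of density `f`, where `0 < δ`. -/
noncomputable def dilatedDensity (δ : ℝ) (f : E → ℝ) (x : E) : ℝ :=
  (δ ^ Module.finrank ℝ E)⁻¹ * f (δ⁻¹ • x)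

lemma translateMixture_dilatedDensity {ι : Type*} [Fintype ι] (w : ι → ℝ) (m : ι → E) (δ : ℝ)
    (f : E → ℝ) :
    translateMixture w m (dilatedDensity δ f)
      = dilatedDensity δ (translateMixture w (fun i => δ⁻¹ • m i) f) := by
  ext x
  simp only [translateMixture, dilatedDensity, smul_sub, Finset.mul_sum, mul_left_comm]

lemma tendsto_inv_smul_sub_cocompact {m m' : E} (h : m ≠ m') :
    Tendsto (fun δ : ℝ => δ⁻¹ • m - δ⁻¹ • m') (𝓝[>] 0) (cocompact E) := by
  have hinv : Tendsto (fun δ : ℝ => δ⁻¹) (𝓝[>] 0) (cocompact ℝ) :=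
    tendsto_inv_nhdsGT_zero.mono_right atTop_le_cocompact
  simpa only [Function.comp_def, smul_sub] using
    (isClosedEmbedding_smul_left (sub_ne_zero.2 h)).tendsto_cocompact.comp hinv

variable [MeasurableSpace E] [BorelSpace E] [FiniteDimensional ℝ E] {μ : Measure E}
  [μ.IsAddHaarMeasure] {f : E → ℝ}

lemma differentialEntropy_dilatedDensity (hf1 : ∫ x, f x ∂μ = 1)
    (hent : Integrable (fun x => negMulLog (f x)) μ) {δ : ℝ} (hδ : 0 < δ) :
    differentialEntropy μ (dilatedDensity δ f)
      = differentialEntropy μ f + Module.finrank ℝ E * log δ := by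
  have hfint : Integrable f μ := .of_integral_ne_zero (by simp [hf1])
  calc differentialEntropy μ (dilatedDensity δ f)
      = δ ^ Module.finrank ℝ E
          * differentialEntropy μ (fun x => (δ ^ Module.finrank ℝ E)⁻¹ * f x) :=
        Measure.integral_comp_inv_smul_of_nonneg μ
          (fun x => negMulLog ((δ ^ Module.finrank ℝ E)⁻¹ * f x)) hδ.le
    _ = differentialEntropy μ f + Module.finrank ℝ E * log δ := by
        rw [differentialEntropy_const_mul hfint hent, hf1, negMulLog, log_inv, log_pow]
        field_simp
        ring

theorem tendsto_differentialEntropy_translateMixture_dilatedDensity {ι : Type*} [Fintype ι]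
    {w : ι → ℝ} {m : ι → E} {C : ℝ} (hw : ∀ i, 0 ≤ w i) (hw1 : ∑ i, w i = 1)
    (hm : m.Injective) (hf0 : ∀ x, 0 ≤ f x) (hfC : ∀ x, f x ≤ C) (hf1 : ∫ x, f x ∂μ = 1)
    (hent : Integrable (fun x => negMulLog (f x)) μ) (hf : Tendsto f (cocompact E) (𝓝 0)) :
    Tendsto (fun δ : ℝ => differentialEntropy μ (translateMixture w m (dilatedDensity δ f))
        - Module.finrank ℝ E * log δ)
      (𝓝[>] 0) (𝓝 (differentialEntropy μ f + ∑ i, negMulLog (w i))) := by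
  have hfint : Integrable f μ := .of_integral_ne_zero (by simp [hf1])
  have hmix1 (s : ι → E) : ∫ x, translateMixture w s f x ∂μ = 1 := by
    rw [integral_translateMixture hfint, hw1, hf1, one_mul]
  refine (tendsto_differentialEntropy_translateMixture hw hw1 hf0 hfC hf1 hent hf
    fun i j hij => tendsto_inv_smul_sub_cocompact (hm.ne hij)).congr' ?_
  filter_upwards [self_mem_nhdsWithin] with δ hδ
  rw [translateMixture_dilatedDensity, differentialEntropy_dilatedDensity (hmix1 _)
    (integrable_negMulLog_translateMixture hw hw1 hf0 hfC hfint hent _) hδ, add_sub_cancel_right]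

end Dilation

section Gaussian

variable (m : ℝ) (v : NNReal)

lemma gaussianPDFReal_le (x : ℝ) : gaussianPDFReal m v x ≤ (√(2 * π * v))⁻¹ :=
  mul_le_of_le_one_right (by positivity)
    (exp_le_one_iff.2 (div_nonpos_of_nonpos_of_nonneg (by simp [sq_nonneg]) (by positivity)))

lemma tendsto_gaussianPDFReal_cocompact :
    Tendsto (gaussianPDFReal m v) (cocompact ℝ) (𝓝 0) := by
  rcases eq_or_ne v 0 with rfl | hv
  · rw [gaussianPDFReal_zero_var]
    exact tendsto_const_nhds
  have hsub : Tendsto (fun x : ℝ => |x - m|) (cocompact ℝ) atTop :=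
    tendsto_norm_cocompact_atTop.comp
      (Homeomorph.subRight m).isClosedEmbedding.tendsto_cocompact
  have hsq : Tendsto (fun x : ℝ => (x - m) ^ 2 / (2 * v)) (cocompact ℝ) atTop := by
    simpa only [Function.comp_def, sq_abs] using
      ((tendsto_pow_atTop two_ne_zero).comp hsub).atTop_div_const (by positivity)
  simpa only [gaussianPDFReal_def, Function.comp_def, neg_div, mul_zero] using
    (tendsto_exp_neg_atTop_nhds_zero.comp hsq).const_mul (√(2 * π * v))⁻¹

lemma dilatedDensity_gaussianPDFReal {δ : ℝ} (hδ : 0 < δ) :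
    dilatedDensity δ (gaussianPDFReal m v) = gaussianPDFReal (δ * m) ((δ ^ 2).toNNReal * v) := by
  ext x
  rw [dilatedDensity, Module.finrank_self, pow_one, smul_eq_mul, gaussianPDFReal_inv_mul hδ.ne',
    abs_of_pos hδ, inv_mul_cancel_left₀ hδ.ne', toNNReal_of_nonneg (sq_nonneg δ)]

variable {v}

lemma negMulLog_gaussianPDFReal (hv : v ≠ 0) (x : ℝ) :
    negMulLog (gaussianPDFReal m v x)
      = gaussianPDFReal m v x * (1 / 2 * log (2 * π * v) + (x - m) ^ 2 / (2 * v)) := by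
  have hlog : log (gaussianPDFReal m v x)
      = -(1 / 2 * log (2 * π * v)) - (x - m) ^ 2 / (2 * v) := by
    rw [gaussianPDFReal, log_mul (by positivity) (exp_pos _).ne', log_inv,
      log_sqrt (by positivity), log_exp]
    ring
  rw [negMulLog, hlog]
  ring

lemma integrable_gaussianPDFReal_mul_sq (hv : v ≠ 0) :
    Integrable fun x => gaussianPDFReal m v x * (x - m) ^ 2 := by
  have h : Integrable (fun x => (x - m) ^ 2) (gaussianReal m v) :=
    ((memLp_id_gaussianReal 2).sub (memLp_const m)).integrable_sq
  rw [gaussianReal_of_var_ne_zero m hv, integrable_withDensity_iff_integrable_smul'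
    (measurable_gaussianPDF m v) (ae_of_all _ fun _ => gaussianPDF_lt_top)] at h
  simpa only [toReal_gaussianPDF, smul_eq_mul] using h

lemma integral_gaussianPDFReal_mul_sq (hv : v ≠ 0) :
    ∫ x, gaussianPDFReal m v x * (x - m) ^ 2 = v := by
  have h := variance_fun_id_gaussianReal (μ := m) (v := v)
  rw [variance_eq_integral (by fun_prop), integral_id_gaussianReal,
    integral_gaussianReal_eq_integral_smul hv] at h
  simpa only [smul_eq_mul] using h

lemma integrable_negMulLog_gaussianPDFReal (hv : v ≠ 0) :
    Integrable fun x => negMulLog (gaussianPDFReal m v x) := by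
  simp only [negMulLog_gaussianPDFReal m hv, mul_add, ← mul_div_assoc]
  exact ((integrable_gaussianPDFReal m v).mul_const _).add
    ((integrable_gaussianPDFReal_mul_sq m hv).div_const _)

lemma differentialEntropy_gaussianPDFReal (hv : v ≠ 0) :
    differentialEntropy volume (gaussianPDFReal m v) = 1 / 2 * log (2 * π * exp 1 * v) := by
  simp only [differentialEntropy, negMulLog_gaussianPDFReal m hv, mul_add, ← mul_div_assoc]
  rw [integral_add ((integrable_gaussianPDFReal m v).mul_const _)
      ((integrable_gaussianPDFReal_mul_sq m hv).div_const _),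
    integral_mul_const, integral_div, integral_gaussianPDFReal_eq_one m hv,
    integral_gaussianPDFReal_mul_sq m hv, mul_right_comm _ (exp 1),
    log_mul (by positivity) (exp_pos 1).ne', log_exp]
  field_simp

end Gaussian

theorem mixture_entropy_small_variance_limit_general {ι : Type*} [Fintype ι] {w m : ι → ℝ}
    (hw : ∀ i, 0 ≤ w i) (hw1 : ∑ i, w i = 1) (hm : m.Injective) :
    Tendsto
      (fun δ : ℝ =>
        differentialEntropy volume (fun x => ∑ i, w i * gaussianPDFReal (m i) (δ ^ 2).toNNReal x)
          - 1 / 2 * log (2 * π * exp 1 * δ ^ 2))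
      (𝓝[>] 0) (𝓝 (∑ i, negMulLog (w i))) := by
  have h := (tendsto_differentialEntropy_translateMixture_dilatedDensity hw hw1 hm
    (gaussianPDFReal_nonneg 0 1) (gaussianPDFReal_le 0 1)
    (integral_gaussianPDFReal_eq_one 0 one_ne_zero)
    (integrable_negMulLog_gaussianPDFReal 0 one_ne_zero)
    (tendsto_gaussianPDFReal_cocompact 0 1)).sub_const
      (differentialEntropy volume (gaussianPDFReal 0 1))
  rw [add_sub_cancel_left] at h
  refine h.congr' ?_
  filter_upwards [self_mem_nhdsWithin] with δ (hδ : 0 < δ)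
  have hmixture : (fun x => ∑ i, w i * gaussianPDFReal (m i) (δ ^ 2).toNNReal x)
      = translateMixture w m (dilatedDensity δ (gaussianPDFReal 0 1)) := by
    ext x
    simp only [dilatedDensity_gaussianPDFReal 0 1 hδ, translateMixture, gaussianPDFReal_sub,
      mul_zero, mul_one, zero_add]
  have hlog : log (2 * π * exp 1 * δ ^ 2) = log (2 * π * exp 1) + 2 * log δ := by
    rw [log_mul (by positivity) (by positivity), log_pow, Nat.cast_ofNat]
  rw [hmixture, differentialEntropy_gaussianPDFReal 0 one_ne_zero, hlog, Module.finrank_self,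
    Nat.cast_one, NNReal.coe_one, mul_one]
  ring

/-- Entropy asymptotics for a small-variance Gaussian mixture: for `p ∈ (0,1)` and
`μ ≠ 0`, the differential entropy `H(q_δ)` of `q_δ = p·N(μ,δ²) + (1−p)·N(0,δ²)`
satisfies `lim_{δ→0⁺} [H(q_δ) − (1/2)·log(2πe·δ²)] = −p·log p − (1−p)·log(1−p)`. -/
theorem mixture_entropy_small_variance_limit (p μ : ℝ)
    (hp0 : 0 < p) (hp1 : p < 1) (hμ : μ ≠ 0) :
    Tendsto
      (fun δ : ℝ =>
        (- ∫ x, mixturePDF p μ δ x * Real.log (mixturePDF p μ δ x))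
          - (1 / 2) * Real.log (2 * π * Real.exp 1 * δ ^ 2))
      (𝓝[>] 0)
      (𝓝 (-p * Real.log p - (1 - p) * Real.log (1 - p))) := by
  have hinj : (![μ, 0] : Fin 2 → ℝ).Injective := by
    simp [Function.Injective, Fin.forall_fin_two, hμ, hμ.symm]
  simpa only [differentialEntropy, mixturePDF, negMulLog, neg_mul, integral_neg, Fin.sum_univ_two,
    Matrix.cons_val_zero, Matrix.cons_val_one, ← sub_eq_add_neg] using
    mixture_entropy_small_variance_limit_general (w := ![p, 1 - p])
      (by simp [Fin.forall_fin_two, hp0.le, hp1.le]) (by simp) hinj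
end
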